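/- Correctness of optimistic value iteration for SSGs: let V = lfp(B), let d be an operator on value functions that is monotone, satisfies d(f) ≤ f for all f, and satisfies d(f) = f for all f ≤ V, and let ε ≥ 0. If L and U are value functions with L ≤ V pointwise, d(B(U)) ≤ U pointwise, and U(s) ≤ L(s) + ε for all s ∈ S, then for every state s: L(s) ≤ V(s) ≤ U(s) ≤ L(s) + ε; in particular 0 ≤ V(s) − L(s) ≤ ε, so L is an ε-precise under-approximation of the value. -/

import Mathlib

/-!
Let `V` be the least fixpoint of the monotone Bellman operator `B`, and put `W = U ⊓ V`. By
monotonicity `B W ≤ B V ≤ V`, so `d` fixes `B W`, and hence `B W = d (B W) ≤ d (B U) ≤ U`. Thus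
`B W ≤ W`, i.e. `W` is a pre-fixpoint of `B`, and `V ≤ W ≤ U` by leastness. The remaining
inequalities are immediate from `L ≤ V` and `U ≤ L + ε`.
-/

noncomputable section
open Classical Finset

instance : Fact ((0:ℝ) ≤ 1) := ⟨zero_le_one⟩

/-- A finite simple stochastic game: states are partitioned into Maximizer states
(`isMax`) and Minimizer states, each state has a nonempty finite set of available
actions, the transition function is a probability distribution for every available
action, and `F` is the set of goal states. -/
structure SSG (S A : Type) [Fintype S] [Nonempty S] [Fintype A] where
  isMax : S → Prop
  Av : S → Finset A
  avNonempty : ∀ s, (Av s).Nonempty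
  tr : S → A → S → ℝ
  tr_nonneg : ∀ s a, a ∈ Av s → ∀ s', 0 ≤ tr s a s'
  tr_sum : ∀ s a, a ∈ Av s → ∑ s', tr s a s' = 1
  F : Set S

variable {S A : Type} [Fintype S] [Nonempty S] [Fintype A]

/-- The expected value `Σ_{s'} δ(s,a,s')·f(s')` of `f` after playing `a` in `s`. -/
def SSG.sumR (G : SSG S A) (f : S → unitInterval) (s : S) (a : A) : ℝ :=
  ∑ s', G.tr s a s' * (f s' : ℝ)

lemma SSG.sumR_mem (G : SSG S A) (f : S → unitInterval) {s : S} {a : A} (ha : a ∈ G.Av s) :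
    G.sumR f s a ∈ Set.Icc (0 : ℝ) 1 := by
  constructor
  · exact Finset.sum_nonneg fun s' _ => mul_nonneg (G.tr_nonneg s a ha s') (f s').2.1
  · calc ∑ s', G.tr s a s' * (f s' : ℝ) ≤ ∑ s', G.tr s a s' * 1 := by
          refine Finset.sum_le_sum fun s' _ => ?_
          exact mul_le_mul_of_nonneg_left (f s').2.2 (G.tr_nonneg s a ha s')
    _ = 1 := by simpa using G.tr_sum s a ha

/-- The Bellman operator: `1` on goal states, the maximum over available actions at
Maximizer states, the minimum over available actions at Minimizer states.
Value functions are maps `S → [0,1]`, ordered pointwise. -/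
noncomputable def SSG.bellman (G : SSG S A) (f : S → unitInterval) : S → unitInterval :=
  fun s =>
    if s ∈ G.F then 1
    else if G.isMax s then
      (G.Av s).attach.sup' (Finset.attach_nonempty_iff.mpr (G.avNonempty s))
        (fun a => (⟨G.sumR f s a.1, G.sumR_mem f a.2⟩ : unitInterval))
    else
      (G.Av s).attach.inf' (Finset.attach_nonempty_iff.mpr (G.avNonempty s))
        (fun a => (⟨G.sumR f s a.1, G.sumR_mem f a.2⟩ : unitInterval))

/-- The Knaster–Tarski least fixpoint of an operator on a complete lattice. -/
def lfpOf {P : Type*} [CompleteLattice P] (Φ : P → P) : P := sInf {x | Φ x ≤ x}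

lemma SSG.sumR_mono (G : SSG S A) {f g : S → unitInterval} (hfg : f ≤ g) {s : S} {a : A}
    (ha : a ∈ G.Av s) : G.sumR f s a ≤ G.sumR g s a :=
  Finset.sum_le_sum fun s' _ => mul_le_mul_of_nonneg_left (hfg s') (G.tr_nonneg s a ha s')

lemma SSG.bellman_mono (G : SSG S A) : Monotone G.bellman := by
  intro f g hfg s
  unfold SSG.bellman
  split_ifs
  · exact le_rfl
  · exact Finset.sup'_mono_fun fun a _ => G.sumR_mono hfg a.2
  · exact Finset.inf'_mono_fun fun a _ => G.sumR_mono hfg a.2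

lemma lfpOf_le {P : Type*} [CompleteLattice P] {Φ : P → P} {x : P} (hx : Φ x ≤ x) :
    lfpOf Φ ≤ x :=
  sInf_le hx

lemma map_lfpOf_le {P : Type*} [CompleteLattice P] {Φ : P → P} (hΦ : Monotone Φ) :
    Φ (lfpOf Φ) ≤ lfpOf Φ :=
  le_sInf fun _ hx => (hΦ (lfpOf_le hx)).trans hx

/-- The core of the argument, valid in any complete lattice: a pre-fixpoint of `d ∘ Φ` lies above
the least fixpoint of `Φ` as soon as `d` is monotone and fixes everything below that fixpoint. -/
lemma lfpOf_le_of_deflate {P : Type*} [CompleteLattice P] {Φ d : P → P} (hΦ : Monotone Φ)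
    (hd : Monotone d) (hdfix : ∀ f, f ≤ lfpOf Φ → d f = f) {U : P} (hU : d (Φ U) ≤ U) :
    lfpOf Φ ≤ U := by
  have hV : Φ (U ⊓ lfpOf Φ) ≤ lfpOf Φ := (hΦ inf_le_right).trans (map_lfpOf_le hΦ)
  have hW : Φ (U ⊓ lfpOf Φ) ≤ U :=
    calc Φ (U ⊓ lfpOf Φ) = d (Φ (U ⊓ lfpOf Φ)) := (hdfix _ hV).symm
      _ ≤ d (Φ U) := hd (hΦ inf_le_left)
      _ ≤ U := hU
  exact (lfpOf_le (le_inf hW hV)).trans inf_le_left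

/-- Correctness of optimistic value iteration: if `L ≤ V`, `d(B(U)) ≤ U` and
`U ≤ L + ε` pointwise (for a monotone deflating operator `d` fixing everything
below `V = lfp(B)`), then `L ≤ V ≤ U ≤ L + ε` pointwise; in particular
`0 ≤ V − L ≤ ε`, i.e. `L` is an ε-precise under-approximation of the value. -/
theorem SSG.ovi_correct (G : SSG S A)
    (d : (S → unitInterval) → (S → unitInterval)) (hd : Monotone d)
    (hdle : ∀ f, d f ≤ f) (hdfix : ∀ f, f ≤ lfpOf G.bellman → d f = f)
    (ε : ℝ) (hε : 0 ≤ ε) (L U : S → unitInterval)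
    (hL : L ≤ lfpOf G.bellman) (hU : d (G.bellman U) ≤ U)
    (hclose : ∀ s, (U s : ℝ) ≤ (L s : ℝ) + ε) :
    ∀ s, (L s : ℝ) ≤ (lfpOf G.bellman s : ℝ) ∧
      (lfpOf G.bellman s : ℝ) ≤ (U s : ℝ) ∧ (U s : ℝ) ≤ (L s : ℝ) + ε ∧
      0 ≤ (lfpOf G.bellman s : ℝ) - (L s : ℝ) ∧
      (lfpOf G.bellman s : ℝ) - (L s : ℝ) ≤ ε := by
  intro s
  have h1 : (L s : ℝ) ≤ (lfpOf G.bellman s : ℝ) := hL s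
  have h2 : (lfpOf G.bellman s : ℝ) ≤ (U s : ℝ) :=
    lfpOf_le_of_deflate G.bellman_mono hd hdfix hU s
  have h3 := hclose s
  exact ⟨h1, h2, h3, by linarith, by linarith⟩
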